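/- For 6 ≤ n ≤ 8, the saturation number sat(n, K_{3,3}) is at most 2n. -/

import Mathlib

open SimpleGraph

/-- `G` contains a subgraph isomorphic to `K_{3,3}`. -/
def ContainsK33 {V : Type*} (G : SimpleGraph V) : Prop :=
  ∃ f : Fin 3 ⊕ Fin 3 → V, Function.Injective f ∧
    ∀ a b, (completeBipartiteGraph (Fin 3) (Fin 3)).Adj a b → G.Adj (f a) (f b)

/-- `G` is `K_{3,3}`-saturated. -/
def K33Saturated {V : Type*} (G : SimpleGraph V) : Prop :=
  ¬ ContainsK33 G ∧
    ∀ x y : V, x ≠ y → ¬ G.Adj x y → ContainsK33 (G ⊔ SimpleGraph.edge x y)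

/-- A graph contains `K_{3,3}` iff some three distinct vertices have three common neighbours. -/
theorem containsK33_iff {V : Type*} [Fintype V] (G : SimpleGraph V) [DecidableRel G.Adj] :
    ContainsK33 G ↔ ∃ a b, a ≠ b ∧ ∃ c, a ≠ c ∧ b ≠ c ∧
      3 ≤ (Finset.univ.filter fun v => G.Adj a v ∧ G.Adj b v ∧ G.Adj c v).card := by
  classical
  constructor
  · rintro ⟨f, hf, hadj⟩
    refine ⟨f (.inl 0), f (.inl 1), hf.ne (by decide), f (.inl 2), hf.ne (by decide),
      hf.ne (by decide), ?_⟩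
    have hcard : (Finset.univ.image fun i : Fin 3 => f (.inr i)).card = 3 := by
      exact (Finset.card_image_of_injective _ (hf.comp Sum.inr_injective)).trans (by simp)
    refine hcard.ge.trans (Finset.card_le_card ?_)
    intro v hv
    obtain ⟨i, -, rfl⟩ := Finset.mem_image.1 hv
    simp only [Finset.mem_filter, Finset.mem_univ, true_and]
    exact ⟨hadj _ _ (by simp), hadj _ _ (by simp), hadj _ _ (by simp)⟩
  · rintro ⟨a, b, hab, c, hac, hbc, hcard⟩
    obtain ⟨s, hs, hs3⟩ := Finset.exists_subset_card_eq hcard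
    obtain ⟨x, y, z, hxy, hxz, hyz, rfl⟩ := Finset.card_eq_three.1 hs3
    have hmem : ∀ v ∈ ({x, y, z} : Finset V), G.Adj a v ∧ G.Adj b v ∧ G.Adj c v :=
      fun v hv => (Finset.mem_filter.1 (hs hv)).2
    obtain ⟨hax, hbx, hcx⟩ := hmem x (by simp)
    obtain ⟨hay, hby, hcy⟩ := hmem y (by simp)
    obtain ⟨haz, hbz, hcz⟩ := hmem z (by simp)
    have hadj : ∀ i j, G.Adj (![a, b, c] i) (![x, y, z] j) := by
      intro i j
      fin_cases i <;> fin_cases j <;> assumption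
    refine ⟨Sum.elim ![a, b, c] ![x, y, z], ?_, ?_⟩
    · refine Function.Injective.sumElim ?_ ?_ fun i j => (hadj i j).ne
      · intro i j
        fin_cases i <;> fin_cases j <;> simp [hab, hac, hbc, hab.symm, hac.symm, hbc.symm]
      · intro i j
        fin_cases i <;> fin_cases j <;> simp [hxy, hxz, hyz, hxy.symm, hxz.symm, hyz.symm]
    · rintro (i | i) (j | j) h
      · simp at h
      · exact hadj i j
      · exact (hadj j i).symm
      · simp at h

instance {V : Type*} [Fintype V] [DecidableEq V] (G : SimpleGraph V) [DecidableRel G.Adj] :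
    Decidable (ContainsK33 G) :=
  decidable_of_iff' _ (containsK33_iff G)

instance {V : Type*} [Fintype V] [DecidableEq V] (G : SimpleGraph V) [DecidableRel G.Adj] :
    Decidable (K33Saturated G) :=
  haveI : ∀ x y, DecidableRel (G ⊔ SimpleGraph.edge x y).Adj := fun x y a b =>
    decidable_of_iff (G.Adj a b ∨ (a = x ∧ b = y ∨ a = y ∧ b = x) ∧ a ≠ b)
      (by rw [SimpleGraph.sup_adj, SimpleGraph.edge_adj])
  inferInstanceAs (Decidable (_ ∧ _))

/-- The graph on `V` whose edges are the pairs of distinct vertices listed in `E`. -/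
def graphOfPairs {V : Type*} (E : List (V × V)) : SimpleGraph V :=
  SimpleGraph.fromRel fun a b => (a, b) ∈ E

instance {V : Type*} [DecidableEq V] (E : List (V × V)) : DecidableRel (graphOfPairs E).Adj :=
  fun a b => inferInstanceAs (Decidable (a ≠ b ∧ ((a, b) ∈ E ∨ (b, a) ∈ E)))

theorem ncard_edgeSet_graphOfPairs_le {V : Type*} (E : List (V × V)) :
    (graphOfPairs E).edgeSet.ncard ≤ E.length := by
  classical
  have hsub : (graphOfPairs E).edgeSet ⊆ ((E.map Sym2.mk.uncurry).toFinset : Set (Sym2 V)) := by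
    intro e
    induction e with
    | _ a b =>
      rintro ⟨-, h | h⟩
      · exact List.mem_toFinset.2 (List.mem_map.2 ⟨_, h, rfl⟩)
      · exact List.mem_toFinset.2 (List.mem_map.2 ⟨_, h, Sym2.eq_swap⟩)
  calc (graphOfPairs E).edgeSet.ncard
      ≤ ((E.map Sym2.mk.uncurry).toFinset : Set (Sym2 V)).ncard :=
        Set.ncard_le_ncard hsub (Finset.finite_toSet _)
    _ ≤ E.length := by
        rw [Set.ncard_coe_finset]
        exact (List.toFinset_card_le _).trans (by simp)

/-- The edges of `K_6` minus the path `5, 1, 4, 2`. -/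
def pairsSix : List (Fin 6 × Fin 6) :=
  [(0, 1), (0, 2), (0, 3), (0, 4), (0, 5), (1, 2), (1, 3), (2, 3), (2, 5), (3, 4), (3, 5), (4, 5)]

/-- The edges of a `4`-regular graph on seven vertices. -/
def pairsSeven : List (Fin 7 × Fin 7) :=
  [(0, 1), (0, 3), (0, 4), (0, 6), (1, 2), (1, 5), (1, 6), (2, 3), (2, 5), (2, 6), (3, 4), (3, 5),
    (4, 5), (4, 6)]

/-- The edges of a graph on eight vertices with degrees `2, 2, 4, 4, 5, 5, 5, 5`. -/
def pairsEight : List (Fin 8 × Fin 8) :=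
  [(0, 1), (0, 2), (0, 3), (0, 5), (0, 6), (1, 3), (1, 4), (1, 5), (1, 7), (2, 4), (3, 4), (3, 6),
    (4, 5), (4, 6), (5, 6), (6, 7)]

theorem k33Saturated_pairsSix : K33Saturated (graphOfPairs pairsSix) := by
  decide +kernel

theorem k33Saturated_pairsSeven : K33Saturated (graphOfPairs pairsSeven) := by
  decide +kernel

theorem k33Saturated_pairsEight : K33Saturated (graphOfPairs pairsEight) := by
  decide +kernel

theorem stmt_7 (n : ℕ) (h1 : 6 ≤ n) (h2 : n ≤ 8) :
    ∃ G : SimpleGraph (Fin n), K33Saturated G ∧ G.edgeSet.ncard ≤ 2 * n := by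
  interval_cases n
  · exact ⟨_, k33Saturated_pairsSix, ncard_edgeSet_graphOfPairs_le _⟩
  · exact ⟨_, k33Saturated_pairsSeven, ncard_edgeSet_graphOfPairs_le _⟩
  · exact ⟨_, k33Saturated_pairsEight, ncard_edgeSet_graphOfPairs_le _⟩
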